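/- Let (P, Q, R) be an affinely independent triple of points of the Euclidean plane E = ℝ² and let s : ℕ → {A, B, C, M} be any sequence. Then the intersection ⋂_{n ∈ ℕ} T_n(s) of the nested closed triangles is a singleton; that is, there exists a unique point of E lying in T_n(s) for every n. -/

import Mathlib

noncomputable section

/-- The Euclidean plane. -/
abbrev E := EuclideanSpace ℝ (Fin 2)

/-- The four letters indexing the mid-line subdivision maps. -/
inductive Letter : Type
  | A | B | C | M
deriving DecidableEq

open Letter

/-- The four mid-line subdivision maps on ordered triples of points of the plane. -/
def g : Letter → E × E × E → E × E × E
  | Letter.A, (P, Q, R) => (P, midpoint ℝ P Q, midpoint ℝ P R)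
  | Letter.B, (P, Q, R) => (midpoint ℝ P Q, Q, midpoint ℝ Q R)
  | Letter.C, (P, Q, R) => (midpoint ℝ P R, midpoint ℝ Q R, R)
  | Letter.M, (P, Q, R) => (midpoint ℝ Q R, midpoint ℝ P R, midpoint ℝ P Q)

/-- The set of the three vertices of a triple. -/
def vertexSet (t : E × E × E) : Set E := {t.1, t.2.1, t.2.2}

/-- The iterated triples `Δₙ`, where `Δ₀ = t` and `Δ_{n+1} = g_{s n} Δₙ`. -/
def orbit (t : E × E × E) (s : ℕ → Letter) : ℕ → E × E × E
  | 0 => t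
  | n + 1 => g (s n) (orbit t s n)

/-- The nested closed triangles `Tₙ(s)`: the convex hull of the vertices of `Δₙ`. -/
def T (t : E × E × E) (s : ℕ → Letter) (n : ℕ) : Set E :=
  convexHull ℝ (vertexSet (orbit t s n))

/-!
The triangle `g l t` is the image of `t` under a homothety of ratio `±1/2`: centred at a vertex
with ratio `1/2` for the corner letters, and at the centroid with ratio `-1/2` for `M`. Diameters
are therefore halved at each step, and Cantor's intersection theorem applies.
-/

open AffineMap Bornology Filter Metric Topology

theorem existsUnique_forall_mem_of_antitone_of_tendsto_diam {X : Type*} [MetricSpace X]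
    [CompleteSpace X] {K : ℕ → Set X} (hanti : Antitone K) (hne : ∀ n, (K n).Nonempty)
    (hclosed : ∀ n, IsClosed (K n)) (hbdd : IsBounded (K 0))
    (hdiam : Tendsto (fun n => diam (K n)) atTop (𝓝 0)) : ∃! x, ∀ n, x ∈ K n := by
  have hbdd' (n : ℕ) : IsBounded (K n) := hbdd.subset (hanti n.zero_le)
  have hfin (N : ℕ) : (⋂ n ≤ N, K n).Nonempty :=
    (hne N).mono (Set.subset_iInter₂ fun _ hn => hanti hn)
  obtain ⟨x, hx⟩ := nonempty_iInter_of_nonempty_biInter hclosed hbdd' hfin hdiam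
  rw [Set.mem_iInter] at hx
  refine ⟨x, hx, fun y hy => dist_le_zero.1 ?_⟩
  exact ge_of_tendsto' hdiam fun n => dist_le_diam_of_mem (hbdd' n) (hy n) (hx n)

section Homothety

variable {𝕜 V P : Type*} [NormedField 𝕜] [SeminormedAddCommGroup V] [NormedSpace 𝕜 V]
  [PseudoMetricSpace P] [NormedAddTorsor V P]

theorem dist_homothety_homothety (c : P) (r : 𝕜) (p q : P) :
    dist (homothety c r p) (homothety c r q) = ‖r‖ * dist p q := by
  rw [dist_eq_norm_vsub V, ← linearMap_vsub, homothety_linear, LinearMap.smul_apply,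
    LinearMap.id_apply, norm_smul, ← dist_eq_norm_vsub]

theorem lipschitzWith_homothety (c : P) (r : 𝕜) : LipschitzWith ‖r‖₊ (homothety c r) :=
  .of_dist_le_mul fun p q => (dist_homothety_homothety c r p q).le

end Homothety

theorem midpoint_mem_convexHull (𝕜 : Type*) {V : Type*} [Field 𝕜] [LinearOrder 𝕜]
    [IsStrictOrderedRing 𝕜] [AddCommGroup V] [Module 𝕜 V] {s : Set V} {x y : V}
    (hx : x ∈ s) (hy : y ∈ s) : midpoint 𝕜 x y ∈ convexHull 𝕜 s :=
  (convex_convexHull 𝕜 s).midpoint_mem (subset_convexHull 𝕜 s hx) (subset_convexHull 𝕜 s hy)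

theorem homothety_centroid_neg_inv_two (𝕜 : Type*) {V : Type*} [Field 𝕜] [CharZero 𝕜]
    [AddCommGroup V] [Module 𝕜 V] (x y z : V) :
    homothety ((3⁻¹ : 𝕜) • (x + y + z)) (-2⁻¹ : 𝕜) x = midpoint 𝕜 y z := by
  simp only [homothety_apply, midpoint_eq_smul_add, invOf_eq_inv, vsub_eq_sub, vadd_eq_add]
  module

theorem vertexSet_g_subset_convexHull (l : Letter) (t : E × E × E) :
    vertexSet (g l t) ⊆ convexHull ℝ (vertexSet t) := by
  obtain ⟨P, Q, R⟩ := t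
  have hP : P ∈ vertexSet (P, Q, R) := by simp [vertexSet]
  have hQ : Q ∈ vertexSet (P, Q, R) := by simp [vertexSet]
  have hR : R ∈ vertexSet (P, Q, R) := by simp [vertexSet]
  have hPQ := midpoint_mem_convexHull ℝ hP hQ
  have hPR := midpoint_mem_convexHull ℝ hP hR
  have hQR := midpoint_mem_convexHull ℝ hQ hR
  have hvertex := subset_convexHull ℝ (vertexSet (P, Q, R))
  cases l
  case A => rintro _ (rfl | rfl | rfl); exacts [hvertex hP, hPQ, hPR]
  case B => rintro _ (rfl | rfl | rfl); exacts [hPQ, hvertex hQ, hQR]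
  case C => rintro _ (rfl | rfl | rfl); exacts [hPR, hQR, hvertex hR]
  case M => rintro _ (rfl | rfl | rfl); exacts [hQR, hPR, hPQ]

theorem exists_vertexSet_g_eq_image_homothety (l : Letter) (t : E × E × E) :
    ∃ (c : E) (r : ℝ), ‖r‖₊ = 2⁻¹ ∧ vertexSet (g l t) = homothety c r '' vertexSet t := by
  obtain ⟨P, Q, R⟩ := t
  cases l
  case A =>
    refine ⟨P, 2⁻¹, by simp, ?_⟩
    simp [g, vertexSet, Set.image_insert_eq, homothety_inv_two]
  case B =>
    refine ⟨Q, 2⁻¹, by simp, ?_⟩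
    simp [g, vertexSet, Set.image_insert_eq, homothety_inv_two, midpoint_comm (R := ℝ) P Q]
  case C =>
    refine ⟨R, 2⁻¹, by simp, ?_⟩
    simp [g, vertexSet, Set.image_insert_eq, homothety_inv_two, midpoint_comm (R := ℝ) _ R]
  case M =>
    refine ⟨(3⁻¹ : ℝ) • (P + Q + R), -2⁻¹, by simp, ?_⟩
    have hP := homothety_centroid_neg_inv_two ℝ P Q R
    have hQ := homothety_centroid_neg_inv_two ℝ Q P R
    have hR := homothety_centroid_neg_inv_two ℝ R P Q
    rw [add_comm Q P] at hQ
    rw [add_rotate R P Q] at hR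
    simp only [g, vertexSet, Set.image_insert_eq, Set.image_singleton, hP, hQ, hR]

section NestedTriangles

variable (t : E × E × E) (s : ℕ → Letter)

theorem nonempty_T (n : ℕ) : (T t s n).Nonempty :=
  (Set.insert_nonempty _ _).convexHull

theorem isCompact_T (n : ℕ) : IsCompact (T t s n) :=
  (Set.toFinite {_, _, _}).isCompact_convexHull ℝ

theorem antitone_T : Antitone (T t s) :=
  antitone_nat_of_succ_le fun n =>
    convexHull_min (vertexSet_g_subset_convexHull (s n) _) (convex_convexHull ℝ _)

theorem exists_T_succ_eq_image_homothety (n : ℕ) :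
    ∃ (c : E) (r : ℝ), ‖r‖₊ = 2⁻¹ ∧ T t s (n + 1) = homothety c r '' T t s n := by
  obtain ⟨c, r, hr, himage⟩ := exists_vertexSet_g_eq_image_homothety (s n) (orbit t s n)
  refine ⟨c, r, hr, ?_⟩
  rw [T, T, AffineMap.image_convexHull, ← himage, orbit]

theorem diam_T_succ_le (n : ℕ) : diam (T t s (n + 1)) ≤ 2⁻¹ * diam (T t s n) := by
  obtain ⟨c, r, hr, himage⟩ := exists_T_succ_eq_image_homothety t s n
  rw [himage]
  simpa [hr] using (lipschitzWith_homothety c r).diam_image_le _ (isCompact_T t s n).isBounded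

theorem diam_T_le (n : ℕ) : diam (T t s n) ≤ 2⁻¹ ^ n * diam (T t s 0) :=
  le_geom (u := fun k => diam (T t s k)) (inv_nonneg.2 zero_le_two) n
    fun k _ => diam_T_succ_le t s k

theorem tendsto_diam_T : Tendsto (fun n => diam (T t s n)) atTop (𝓝 0) := by
  have hgeom : Tendsto (fun n : ℕ => 2⁻¹ ^ n * diam (T t s 0)) atTop (𝓝 0) := by
    simpa using (tendsto_pow_atTop_nhds_zero_of_lt_one (by norm_num : (0 : ℝ) ≤ 2⁻¹)
      (by norm_num)).mul_const (diam (T t s 0))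
  exact squeeze_zero (fun _ => diam_nonneg) (diam_T_le t s) hgeom

end NestedTriangles

/-- For an affinely independent (nondegenerate) triangle and any address sequence,
the nested closed triangles `Tₙ(s)` intersect in exactly one point. -/
theorem nested_triangles_unique_point (P Q R : E)
    (hind : AffineIndependent ℝ ![P, Q, R]) (s : ℕ → Letter) :
    ∃! x : E, ∀ n : ℕ, x ∈ T (P, Q, R) s n :=
  existsUnique_forall_mem_of_antitone_of_tendsto_diam (antitone_T _ s) (nonempty_T _ s)
    (fun n => (isCompact_T _ s n).isClosed) (isCompact_T _ s 0).isBounded (tendsto_diam_T _ s)
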